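/- For the so(m) rational R matrix and integers 0 ≤ m₁ with 2m₁ ≤ m, the diagonal matrix K(u) with k_i(u) = k_ī(u) = 1 for i ∈ {1,…,m₁} and k_i(u) = (1+cu)/(1−cu) for the remaining indices, where c = 2/(κ − (2m₁ − 1)) and 2κ = m−2, solves the reflection equation. -/

import Mathlib

namespace RefClass12

open Matrix

/-- The conjugate index `ī = m + 1 - i` (0-based: `m - 1 - i`). -/
def barso (m : ℕ) (i : Fin m) : Fin m := ⟨m - 1 - (i : ℕ), by have := i.isLt; omega⟩

/-- Kronecker (tensor) product of matrices on `ℂ^m ⊗ ℂ^m`. -/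
noncomputable def kron {m : ℕ} (A B : Matrix (Fin m) (Fin m) ℂ) :
    Matrix (Fin m × Fin m) (Fin m × Fin m) ℂ :=
  fun r c => A r.1 c.1 * B r.2 c.2

/-- The permutation operator `P = Σ_{i,j} E_{ij} ⊗ E_{ji}`. -/
noncomputable def Pm (m : ℕ) : Matrix (Fin m × Fin m) (Fin m × Fin m) ℂ :=
  fun r c => if r.1 = c.2 ∧ r.2 = c.1 then 1 else 0

/-- The operator `Q = P^{t₁} = Σ_{i,j} E_{j̄ī} ⊗ E_{ji}` (all signs `θ_i`
trivialize in the `so(m)` case). -/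
noncomputable def Qm (m : ℕ) : Matrix (Fin m × Fin m) (Fin m × Fin m) ℂ :=
  fun r c => if r.1 = barso m r.2 ∧ c.1 = barso m c.2 then 1 else 0

/-- The rational `so(m)` R matrix `R(u) = I + P/u − Q/(u+κ)`. -/
noncomputable def Rmat (m : ℕ) (κ u : ℂ) :
    Matrix (Fin m × Fin m) (Fin m × Fin m) ℂ :=
  1 + u⁻¹ • Pm m - (u + κ)⁻¹ • Qm m

/-- The diagonal matrix of solution D3 for `so(m)`: `k_i(u) = k_ī(u) = 1` for
`i ∈ {1,…,m₁}` and `k_i(u) = (1+cu)/(1−cu)` for the remaining indices. -/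
noncomputable def KD3 (m m1 : ℕ) (c u : ℂ) : Matrix (Fin m) (Fin m) ℂ :=
  Matrix.diagonal fun i =>
    if (i : ℕ) < m1 ∨ m - m1 ≤ (i : ℕ) then 1 else (1 + c * u) / (1 - c * u)

/-!
`K(u)` is proportional to `1 - c u S`, where `S` is the diagonal matrix with entry `1` on the outer
`2 m₁` indices and `-1` on the remaining ones. The argument works for every involution `S` that is
fixed by transposition about the antidiagonal. Expand both sides of the reflection equation in the
number of factors `Q`. The terms without `Q` cancel: this is the reflection equation for Yang's
`R(u) = 1 + P / u`. Each of the three remaining groups of terms is a multiple of the single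
commutator `Q S₁ - S₁ Q`, and for `2 κ = m - 2` their coefficients add up to a multiple of
`c (c tr S + 4)`, which vanishes for the prescribed `c` since `tr S = 4 m₁ - m`.
-/

section Abstract

variable {k A : Type*} [CommRing k] [Ring A] [Algebra k A]

theorem commute_one_sub_smul {X Y : A} (hXY : Commute X Y) (a b : k) :
    Commute (1 - a • X) (1 - b • Y) :=
  (Commute.one_left _).sub_left
    ((Commute.one_right _).sub_right ((hXY.smul_left a).smul_right b))

/-- The relations satisfied by the permutation `P` and the contraction `Q` on `V ⊗ V`, where
`dim V = n`, and by the two copies `S = s ⊗ 1`, `T = 1 ⊗ s` of a self-adjoint involution `s` of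
`V` with trace `t`. They turn the reflection equation into a computation in an abstract algebra. -/
structure BrauerInvolution (P Q S T : A) (n t : k) : Prop where
  P_mul_P : P * P = 1
  P_mul_Q : P * Q = Q
  Q_mul_P : Q * P = Q
  Q_mul_Q : Q * Q = n • Q
  P_mul_S : P * S = T * P
  S_mul_S : S * S = 1
  T_mul_S : T * S = S * T
  Q_mul_T : Q * T = Q * S
  T_mul_Q : T * Q = S * Q
  Q_mul_S_mul_Q : Q * S * Q = t • Q

namespace BrauerInvolution

variable {P Q S T : A} {n t : k} (h : BrauerInvolution P Q S T n t)
include h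

theorem P_mul_T : P * T = S * P := by
  rw [← mul_one (P * T), ← h.P_mul_P, ← mul_assoc, mul_assoc P T, ← h.P_mul_S, ← mul_assoc,
    h.P_mul_P, one_mul]

theorem T_mul_T : T * T = 1 := by
  have hT : T = P * S * P := by rw [h.P_mul_S, mul_assoc, h.P_mul_P, mul_one]
  calc T * T = P * S * (P * T) := by rw [← mul_assoc, ← hT]
    _ = P * (S * S) * P := by rw [h.P_mul_T]; noncomm_ring
    _ = 1 := by rw [h.S_mul_S, mul_one, h.P_mul_P]

theorem P_mul_one_sub_smul_S (a : k) : P * (1 - a • S) = (1 - a • T) * P := by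
  simp only [mul_sub, sub_mul, mul_one, one_mul, mul_smul_comm, smul_mul_assoc, h.P_mul_S]

theorem P_mul_one_sub_smul_T (a : k) : P * (1 - a • T) = (1 - a • S) * P := by
  simp only [mul_sub, sub_mul, mul_one, one_mul, mul_smul_comm, smul_mul_assoc, h.P_mul_T]

theorem Q_mul_one_sub_smul_T (a : k) : Q * (1 - a • T) = Q * (1 - a • S) := by
  simp only [mul_sub, mul_smul_comm, h.Q_mul_T]

theorem one_sub_smul_T_mul_Q (a : k) : (1 - a • T) * Q = (1 - a • S) * Q := by
  simp only [sub_mul, smul_mul_assoc, h.T_mul_Q]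

theorem yang_mul_one_sub_smul_S_mul_Q (x a : k) :
    (1 + x • P) * (1 - a • S) * Q = (1 + x) • ((1 - a • S) * Q) := by
  have hP : P * (1 - a • S) * Q = (1 - a • S) * Q := by
    rw [h.P_mul_one_sub_smul_S, mul_assoc, h.P_mul_Q, h.one_sub_smul_T_mul_Q]
  rw [add_mul, add_mul, one_mul, smul_mul_assoc, smul_mul_assoc, hP, add_smul, one_smul]

theorem Q_mul_one_sub_smul_S_mul_yang (x a : k) :
    Q * (1 - a • S) * (1 + x • P) = (1 + x) • (Q * (1 - a • S)) := by
  have hP : Q * (1 - a • S) * P = Q * (1 - a • S) := by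
    rw [mul_assoc, ← h.P_mul_one_sub_smul_T, ← mul_assoc, h.Q_mul_P, h.Q_mul_one_sub_smul_T]
  rw [mul_add, mul_one, mul_smul_comm, hP, add_smul, one_smul]

theorem yang_reflection {a b x y : k} (hxy : x * (a - b) = y * (a + b)) :
    (1 + x • P) * (1 - a • S) * (1 + y • P) * (1 - b • T) =
      (1 - b • T) * (1 + y • P) * (1 - a • S) * (1 + x • P) := by
  have hnone := (commute_one_sub_smul h.T_mul_S.symm a b).eq
  have hleft : P * (1 - a • S) * (1 - b • T) - (1 - b • T) * (1 - a • S) * P =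
      (a - b) • ((S - T) * P) := by
    rw [h.P_mul_one_sub_smul_S, mul_assoc, h.P_mul_one_sub_smul_T]
    simp only [mul_sub, sub_mul, mul_one, one_mul, mul_smul_comm, smul_mul_assoc, ← mul_assoc,
      h.T_mul_S]
    module
  have hmiddle : (1 - a • S) * P * (1 - b • T) - (1 - b • T) * P * (1 - a • S) =
      -(a + b) • ((S - T) * P) := by
    rw [mul_assoc, h.P_mul_one_sub_smul_T, mul_assoc _ P, h.P_mul_one_sub_smul_S]
    simp only [mul_sub, sub_mul, one_mul, mul_smul_comm, smul_mul_assoc, ← mul_assoc, h.S_mul_S,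
      h.T_mul_T]
    module
  have hboth : P * (1 - a • S) * P * (1 - b • T) = (1 - b • T) * P * (1 - a • S) * P := by
    have hconj : P * (1 - a • S) * P = 1 - a • T := by
      rw [h.P_mul_one_sub_smul_S, mul_assoc, h.P_mul_P, mul_one]
    rw [hconj, mul_assoc, mul_assoc, ← mul_assoc P, hconj]
    exact commute_one_sub_smul (Commute.refl T) a b
  generalize 1 - a • S = K₁ at *
  generalize 1 - b • T = K₂ at *
  linear_combination (norm := skip) hnone + x • hleft + y • hmiddle + (x * y) • hboth +
    hxy • ((S - T) * P)
  simp only [mul_add, add_mul, mul_one, one_mul, mul_smul_comm, smul_mul_assoc]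
  module

theorem yang_mul_contraction_sub (a b x : k) :
    (1 + x • P) * (1 - a • S) * Q * (1 - b • T) - (1 - b • T) * Q * (1 - a • S) * (1 + x • P) =
      ((1 + x) * (a - b)) • (Q * S - S * Q) := by
  rw [h.yang_mul_one_sub_smul_S_mul_Q, smul_mul_assoc, mul_assoc _ Q, h.Q_mul_one_sub_smul_T,
    mul_assoc (1 - b • T), mul_assoc (1 - b • T), h.Q_mul_one_sub_smul_S_mul_yang,
    mul_smul_comm, ← mul_assoc (1 - b • T), h.one_sub_smul_T_mul_Q]
  simp only [mul_sub, sub_mul, mul_one, one_mul, mul_smul_comm, smul_mul_assoc, mul_assoc]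
  module

theorem contraction_mul_yang_sub (a b y : k) :
    Q * (1 - a • S) * (1 + y • P) * (1 - b • T) - (1 - b • T) * (1 + y • P) * (1 - a • S) * Q =
      -((1 + y) * (a + b)) • (Q * S - S * Q) := by
  have hQST : Q * S * T = Q := by
    rw [mul_assoc, ← h.T_mul_S, ← mul_assoc, h.Q_mul_T, mul_assoc, h.S_mul_S, mul_one]
  have hTSQ : T * S * Q = Q := by
    rw [h.T_mul_S, mul_assoc, h.T_mul_Q, ← mul_assoc, h.S_mul_S, one_mul]
  rw [h.Q_mul_one_sub_smul_S_mul_yang, mul_assoc _ (1 - a • S), mul_assoc (1 - b • T),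
    ← mul_assoc (1 + y • P), h.yang_mul_one_sub_smul_S_mul_Q]
  simp only [mul_sub, sub_mul, mul_one, one_mul, mul_smul_comm, smul_mul_assoc, ← mul_assoc,
    hQST, hTSQ, h.Q_mul_T, h.T_mul_Q]
  module

theorem contraction_mul_contraction_sub (a b : k) :
    Q * (1 - a • S) * Q * (1 - b • T) - (1 - b • T) * Q * (1 - a • S) * Q =
      -((n - a * t) * b) • (Q * S - S * Q) := by
  have contract : Q * (1 - a • S) * Q = (n - a * t) • Q := by
    simp only [mul_sub, sub_mul, mul_one, mul_smul_comm, smul_mul_assoc, h.Q_mul_Q,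
      h.Q_mul_S_mul_Q, sub_smul, mul_smul]
  rw [contract, mul_assoc, mul_assoc, ← mul_assoc Q, contract, smul_mul_assoc, mul_smul_comm,
    h.Q_mul_one_sub_smul_T, h.one_sub_smul_T_mul_Q]
  simp only [mul_sub, sub_mul, mul_one, one_mul, mul_smul_comm, smul_mul_assoc]
  module

end BrauerInvolution

end Abstract

theorem BrauerInvolution.reflection {k A : Type*} [Field k] [Ring A] [Algebra k A] {P Q S T : A}
    {n t κ c u v : k} (h : BrauerInvolution P Q S T n t) (hκ : 2 * κ = n - 2)
    (hc : c * (c * t + 4) = 0) (hsub : u - v ≠ 0) (hadd : u + v ≠ 0)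
    (hsubκ : u - v + κ ≠ 0) (haddκ : u + v + κ ≠ 0) :
    (1 + (u - v)⁻¹ • P - (u - v + κ)⁻¹ • Q) * (1 - (c * u) • S) *
        (1 + (u + v)⁻¹ • P - (u + v + κ)⁻¹ • Q) * (1 - (c * v) • T) =
      (1 - (c * v) • T) * (1 + (u + v)⁻¹ • P - (u + v + κ)⁻¹ • Q) * (1 - (c * u) • S) *
        (1 + (u - v)⁻¹ • P - (u - v + κ)⁻¹ • Q) := by
  have hyang := h.yang_reflection (a := c * u) (b := c * v) (x := (u - v)⁻¹) (y := (u + v)⁻¹)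
    (by field_simp)
  have hQ_right := h.yang_mul_contraction_sub (c * u) (c * v) (u - v)⁻¹
  have hQ_left := h.contraction_mul_yang_sub (c * u) (c * v) (u + v)⁻¹
  have hQ_both := h.contraction_mul_contraction_sub (c * u) (c * v)
  have hcoeff : -(u + v + κ)⁻¹ * ((1 + (u - v)⁻¹) * (c * u - c * v)) +
      (u - v + κ)⁻¹ * ((1 + (u + v)⁻¹) * (c * u + c * v)) -
      (u - v + κ)⁻¹ * (u + v + κ)⁻¹ * ((n - c * u * t) * (c * v)) = 0 := by
    obtain rfl : n = 2 * κ + 2 := by linear_combination -hκ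
    field_simp
    linear_combination (u * v) * hc
  generalize 1 + (u - v)⁻¹ • P = Y₁ at *
  generalize 1 + (u + v)⁻¹ • P = Y₂ at *
  generalize 1 - (c * u) • S = K₁ at *
  generalize 1 - (c * v) • T = K₂ at *
  linear_combination (norm := skip) hyang - (u + v + κ)⁻¹ • hQ_right - (u - v + κ)⁻¹ • hQ_left +
    ((u - v + κ)⁻¹ * (u + v + κ)⁻¹) • hQ_both + hcoeff • (Q * S - S * Q)
  simp only [mul_sub, sub_mul, mul_smul_comm, smul_mul_assoc]
  module

theorem barso_involutive (m : ℕ) : Function.Involutive (barso m) := by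
  intro i
  ext
  simp only [barso]
  omega

theorem eq_barso_comm {m : ℕ} {i j : Fin m} : i = barso m j ↔ j = barso m i :=
  eq_comm.trans (barso_involutive m).eq_iff

/-- Transposition about the antidiagonal, the adjoint for the bilinear form
`⟨e_i, e_j⟩ = δ_{i j̄}` that `so(m)` preserves. -/
def antitranspose {m : ℕ} (A : Matrix (Fin m) (Fin m) ℂ) : Matrix (Fin m) (Fin m) ℂ :=
  Aᵀ.submatrix (barso m) (barso m)

section Operators

variable {m : ℕ}

theorem kron_mul_kron (A B C D : Matrix (Fin m) (Fin m) ℂ) :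
    kron A B * kron C D = kron (A * C) (B * D) :=
  (mul_kronecker_mul A C B D).symm

theorem kron_one_one : kron (1 : Matrix (Fin m) (Fin m) ℂ) 1 = 1 :=
  one_kronecker_one

theorem kron_smul_left (a : ℂ) (A B : Matrix (Fin m) (Fin m) ℂ) :
    kron (a • A) B = a • kron A B :=
  smul_kronecker a A B

theorem kron_smul_right (a : ℂ) (A B : Matrix (Fin m) (Fin m) ℂ) :
    kron A (a • B) = a • kron A B :=
  kronecker_smul a A B

theorem kron_one_sub_smul_left (a : ℂ) (A : Matrix (Fin m) (Fin m) ℂ) :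
    kron (1 - a • A) 1 = 1 - a • kron A 1 := by
  rw [← kron_one_one, ← kron_smul_left]
  ext r s
  exact sub_mul _ _ _

theorem kron_one_sub_smul_right (a : ℂ) (A : Matrix (Fin m) (Fin m) ℂ) :
    kron 1 (1 - a • A) = 1 - a • kron 1 A := by
  rw [← kron_one_one, ← kron_smul_right]
  ext r s
  exact mul_sub _ _ _

variable (M : Matrix (Fin m × Fin m) (Fin m × Fin m) ℂ) (r s : Fin m × Fin m)

theorem Pm_eq_swap_toMatrix : Pm m = (Equiv.prodComm (Fin m) (Fin m)).toPEquiv.toMatrix := by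
  ext r s
  simp [Pm, PEquiv.toMatrix_apply, Prod.ext_iff, eq_comm, and_comm]

theorem Pm_mul_apply : (Pm m * M) r s = M r.swap s := by
  rw [Pm_eq_swap_toMatrix, PEquiv.toMatrix_toPEquiv_mul]
  rfl

theorem mul_Pm_apply : (M * Pm m) r s = M r s.swap := by
  rw [Pm_eq_swap_toMatrix, PEquiv.mul_toMatrix_toPEquiv]
  rfl

theorem Qm_mul_apply :
    (Qm m * M) r s = if r.1 = barso m r.2 then ∑ i, M (barso m i, i) s else 0 := by
  simp [Matrix.mul_apply, Qm, Fintype.sum_prod_type_right, ite_and]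

theorem mul_Qm_apply :
    (M * Qm m) r s = if s.1 = barso m s.2 then ∑ i, M r (barso m i, i) else 0 := by
  simp [Matrix.mul_apply, Qm, Fintype.sum_prod_type_right, ite_and]

theorem Pm_mul_Pm : Pm m * Pm m = 1 := by
  ext r s
  simp [Pm_mul_apply, Pm, Matrix.one_apply, Prod.ext_iff, and_comm]

theorem Pm_mul_Qm : Pm m * Qm m = Qm m := by
  ext r s
  simp only [Pm_mul_apply, Qm, Prod.fst_swap, Prod.snd_swap, eq_barso_comm (i := r.2)]

theorem Qm_mul_Pm : Qm m * Pm m = Qm m := by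
  ext r s
  simp only [mul_Pm_apply, Qm, Prod.fst_swap, Prod.snd_swap, eq_barso_comm (i := s.2)]

theorem Pm_mul_kron (A B : Matrix (Fin m) (Fin m) ℂ) : Pm m * kron A B = kron B A * Pm m := by
  ext r s
  simp only [Pm_mul_apply, mul_Pm_apply, kron, Prod.fst_swap, Prod.snd_swap, mul_comm]

theorem Qm_mul_kron_one_left (A : Matrix (Fin m) (Fin m) ℂ) :
    Qm m * kron 1 A = Qm m * kron (antitranspose A) 1 := by
  ext r s
  simp [Qm_mul_apply, kron, antitranspose, Matrix.one_apply,
    barso_involutive m _, (barso_involutive m).eq_iff]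

theorem kron_one_left_mul_Qm (A : Matrix (Fin m) (Fin m) ℂ) :
    kron 1 A * Qm m = kron (antitranspose A) 1 * Qm m := by
  ext r s
  simp [mul_Qm_apply, kron, antitranspose, Matrix.one_apply,
    barso_involutive m _, eq_barso_comm (i := r.1)]

theorem Qm_mul_kron_one_right_mul_Qm (A : Matrix (Fin m) (Fin m) ℂ) :
    Qm m * kron A 1 * Qm m = A.trace • Qm m := by
  ext r s
  have htrace : ∑ i, A (barso m i) (barso m i) = A.trace :=
    (barso_involutive m).bijective.sum_comp A.diag
  simp [mul_Qm_apply, Qm_mul_apply, kron, Matrix.one_apply, Qm, htrace, ← ite_and, and_comm]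

theorem Qm_mul_Qm : Qm m * Qm m = (m : ℂ) • Qm m := by
  simpa [kron_one_one] using Qm_mul_kron_one_right_mul_Qm (1 : Matrix (Fin m) (Fin m) ℂ)

theorem brauerInvolution_of_antitranspose_eq {S : Matrix (Fin m) (Fin m) ℂ} (hS : S * S = 1)
    (hSanti : antitranspose S = S) :
    BrauerInvolution (Pm m) (Qm m) (kron S 1) (kron 1 S) (m : ℂ) S.trace where
  P_mul_P := Pm_mul_Pm
  P_mul_Q := Pm_mul_Qm
  Q_mul_P := Qm_mul_Pm
  Q_mul_Q := Qm_mul_Qm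
  P_mul_S := Pm_mul_kron S 1
  S_mul_S := by rw [kron_mul_kron, hS, one_mul, kron_one_one]
  T_mul_S := by simp only [kron_mul_kron, one_mul, mul_one]
  Q_mul_T := by rw [Qm_mul_kron_one_left, hSanti]
  T_mul_Q := by rw [kron_one_left_mul_Qm, hSanti]
  Q_mul_S_mul_Q := Qm_mul_kron_one_right_mul_Qm S

theorem reflection_of_involution {S : Matrix (Fin m) (Fin m) ℂ} (hS : S * S = 1)
    (hSanti : antitranspose S = S) {κ c u v : ℂ} (hκ : 2 * κ = (m : ℂ) - 2)
    (hc : c * (c * S.trace + 4) = 0) (hsub : u - v ≠ 0) (hadd : u + v ≠ 0)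
    (hsubκ : u - v + κ ≠ 0) (haddκ : u + v + κ ≠ 0) :
    Rmat m κ (u - v) * kron (1 - (c * u) • S) 1 * Rmat m κ (u + v) *
        kron 1 (1 - (c * v) • S) =
      kron 1 (1 - (c * v) • S) * Rmat m κ (u + v) * kron (1 - (c * u) • S) 1 *
        Rmat m κ (u - v) := by
  rw [kron_one_sub_smul_left, kron_one_sub_smul_right]
  exact (brauerInvolution_of_antitranspose_eq hS hSanti).reflection hκ hc hsub hadd hsubκ haddκ

end Operators

section BlockSign

variable (m m1 : ℕ)

/-- The diagonal of the involution `S` for which `K(u)` is proportional to `1 - c u S`: `+1` on the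
two outer blocks of `m₁` indices, `-1` on the inner block. -/
noncomputable def blockSign (i : Fin m) : ℂ :=
  if (i : ℕ) < m1 ∨ m - m1 ≤ (i : ℕ) then 1 else -1

theorem blockSign_mul_self (i : Fin m) : blockSign m m1 i * blockSign m m1 i = 1 := by
  unfold blockSign
  split_ifs <;> norm_num

theorem blockSign_barso (i : Fin m) : blockSign m m1 (barso m i) = blockSign m m1 i := by
  unfold blockSign barso
  congr 1
  simp only [eq_iff_iff]
  omega

theorem antitranspose_diagonalSign :
    antitranspose (diagonal (blockSign m m1)) = diagonal (blockSign m m1) := by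
  rw [antitranspose, diagonal_transpose, submatrix_diagonal _ _ (barso_involutive m).injective]
  exact congrArg diagonal (funext (blockSign_barso m m1))

theorem diagonalSign_mul_self :
    diagonal (blockSign m m1) * diagonal (blockSign m m1) = 1 := by
  simp only [diagonal_mul_diagonal, blockSign_mul_self, diagonal_one]

variable {m m1}

theorem trace_diagonalSign (hm1 : 2 * m1 ≤ m) :
    (diagonal (blockSign m m1)).trace = 4 * (m1 : ℂ) - m := by
  obtain ⟨n, rfl⟩ : ∃ n, m = m1 + n + m1 := ⟨m - 2 * m1, by omega⟩
  have hleft (i : Fin m1) : blockSign (m1 + n + m1) m1 (Fin.castAdd m1 (Fin.castAdd n i)) = 1 :=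
    if_pos (.inl i.isLt)
  have hinner (i : Fin n) : blockSign (m1 + n + m1) m1 (Fin.castAdd m1 (Fin.natAdd m1 i)) = -1 :=
    if_neg (by simp)
  have hright (i : Fin m1) : blockSign (m1 + n + m1) m1 (Fin.natAdd (m1 + n) i) = 1 :=
    if_pos (by simp)
  simp only [trace_diagonal, Fin.sum_univ_add, hleft, hinner, hright, Finset.sum_const,
    Finset.card_univ, Fintype.card_fin, nsmul_eq_mul]
  push_cast
  ring

theorem KD3_eq_smul {c u : ℂ} (h : 1 - c * u ≠ 0) :
    KD3 m m1 c u = (1 - c * u)⁻¹ • (1 - (c * u) • diagonal (blockSign m m1)) := by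
  rw [KD3, ← diagonal_one, ← diagonal_smul, diagonal_sub, ← diagonal_smul]
  congr 1
  ext i
  simp only [Pi.smul_apply, blockSign, smul_eq_mul]
  split_ifs <;> field_simp
  ring

end BlockSign

/-- Solution D3 for `so(m)`: with `0 ≤ m₁`, `2m₁ ≤ m`, `2κ = m − 2` and the
fixed value `c = 2/(κ − (2m₁ − 1))`, the matrix `KD3` solves the reflection
equation (as an identity of rational functions in `u, v`). -/
theorem D3_solves (m m1 : ℕ) (hm1 : 2 * m1 ≤ m) (κ : ℂ)
    (hκ : 2 * κ = (m : ℂ) - 2)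
    (c : ℂ) (hc : c = 2 / (κ - (2 * (m1 : ℂ) - 1)))
    (u v : ℂ) (h1 : u ≠ v) (h2 : u + v ≠ 0)
    (h3 : u - v + κ ≠ 0) (h4 : u + v + κ ≠ 0)
    (h5 : 1 - c * u ≠ 0) (h6 : 1 - c * v ≠ 0) :
    Rmat m κ (u - v) * kron (KD3 m m1 c u) 1 * Rmat m κ (u + v) *
        kron 1 (KD3 m m1 c v)
      = kron 1 (KD3 m m1 c v) * Rmat m κ (u + v) * kron (KD3 m m1 c u) 1 *
          Rmat m κ (u - v) := by
  have htrace : c * (c * (diagonal (blockSign m m1)).trace + 4) = 0 := by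
    rw [trace_diagonalSign hm1, show (m : ℂ) = 2 * κ + 2 by linear_combination -hκ]
    -- If `κ = 2 m₁ - 1`, division by zero gives `c = 0`, and `K` is the identity.
    rcases eq_or_ne (κ - (2 * (m1 : ℂ) - 1)) 0 with hden | hden
    · rw [hc, hden, div_zero, zero_mul]
    · have hcden : c * (κ - (2 * (m1 : ℂ) - 1)) = 2 := by rw [hc, div_mul_cancel₀ _ hden]
      linear_combination -2 * c * hcden
  rw [KD3_eq_smul h5, KD3_eq_smul h6, kron_smul_left, kron_smul_right]
  simp only [smul_mul_assoc, mul_smul_comm]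
  rw [smul_comm, reflection_of_involution (diagonalSign_mul_self m m1)
    (antitranspose_diagonalSign m m1) hκ htrace (sub_ne_zero.2 h1) h2 h3 h4]

end RefClass12
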